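/- Let A, B, C be separated cocomplete V-categories, and let f, f' : A ⊗_V B → C be maps admitting right adjoints, i.e. there exist maps h, h' : C → A ⊗_V B with C(f(ξ), c) = (A ⊗_V B)(ξ, h(c)) and C(f'(ξ), c) = (A ⊗_V B)(ξ, h'(c)) for all G-ideals ξ and all c ∈ C. If f(i(a,b)) = f'(i(a,b)) for all (a,b) ∈ A × B, where i(a,b) is the least G-ideal above the representable presheaf (x,y) ↦ A(x,a) ⊗ B(y,b), then f = f'. (The universal V-functor i : A ⊗ B → A ⊗_V B is point-separating for cocontinuous V-functors out of A ⊗_V B.) -/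

import Mathlib

/-!
The representing property `(A ⊗_V B)(i(a,b), ζ) = ζ(a,b)` (`tHom_iG`) carries the proof: if `f` and
`f'` agree on every `i(a,b)`, then
`h(c)(a,b) = C(f(i(a,b)), c) = C(f'(i(a,b)), c) = h'(c)(a,b)`, so the right adjoints coincide, hence
`C(f ξ, c) = C(f' ξ, c)` for all `c`, and `f ξ = f' ξ` because `C` is separated.

The representing property is a Yoneda argument relative to G-ideals. G-ideals are closed under
pointwise infima (`isGIdeal_qRefl`), so `i(a,b)` is a G-ideal, and under cotensors `[v, ζ(-)]`
(`isGIdeal_cotensor`). For `v = ζ(a,b)` the cotensor lies above the representable presheaf at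
`(a,b)`, hence above `i(a,b)`, which is the inequality `ζ(a,b) ≤ (A ⊗_V B)(i(a,b), ζ)`.
-/

/- `V` is a commutative quantale: a complete lattice with a commutative monoid
structure `(*, 1)` distributing over arbitrary suprema. -/
variable {V : Type*} [CommMonoid V] [CompleteLattice V] [IsQuantale V]

/-- The internal hom `[v,w]` of the commutative quantale `V`. -/
def qhom (v w : V) : V := sSup {u | u * v ≤ w}

/-- A separated cocomplete `V`-category: a `V`-category whose underlying order is
antisymmetric, equipped with `sup : DA → A` satisfying
`A(sup φ, a) = ⨅ a', [φ(a'), A(a',a)]`. -/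
structure SupCat (V : Type*) [CommMonoid V] [CompleteLattice V] [IsQuantale V] where
  carrier : Type*
  hom : carrier → carrier → V
  refl : ∀ x, 1 ≤ hom x x
  trans : ∀ x y z, hom x y * hom y z ≤ hom x z
  separated : ∀ x y, 1 ≤ hom x y → 1 ≤ hom y x → x = y
  sup : {φ : carrier → V // ∀ x y, hom x y * φ y ≤ φ x} → carrier
  hom_sup : ∀ (φ : {φ : carrier → V // ∀ x y, hom x y * φ y ≤ φ x}) (a : carrier),
      hom (sup φ) a = ⨅ a', qhom (φ.1 a') (hom a' a)

/-- The set of contravariant presheaves on a separated cocomplete `V`-category. -/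
abbrev PSh (A : SupCat V) := {φ : A.carrier → V // ∀ x y, A.hom x y * φ y ≤ φ x}

/-- A G-ideal on `A ⊗ B`: a presheaf `ξ` on the tensor product `V`-category `A ⊗ B`
such that `⨅_{a,b} [φ(a) ⊗ ψ(b), ξ(a,b)] = ξ(sup_A φ, sup_B ψ)` for all presheaves
`φ` on `A` and `ψ` on `B`. -/
def IsGIdeal (A B : SupCat V) (ξ : A.carrier → B.carrier → V) : Prop :=
  (∀ a a' b b', A.hom a a' * B.hom b b' * ξ a' b' ≤ ξ a b) ∧
  (∀ (φ : PSh A) (ψ : PSh B),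
      (⨅ a, ⨅ b, qhom (φ.1 a * ψ.1 b) (ξ a b)) = ξ (A.sup φ) (B.sup ψ))

/-- The pointwise infimum of all G-ideals above `θ` (the reflection of `θ`
into the tensor product `A ⊗_V B`). -/
def qRefl (A B : SupCat V) (θ : A.carrier → B.carrier → V) :
    A.carrier → B.carrier → V :=
  fun a b => ⨅ ζ ∈ {ζ : A.carrier → B.carrier → V |
      IsGIdeal A B ζ ∧ ∀ a' b', θ a' b' ≤ ζ a' b'}, ζ a b

/-- The tensor product `A ⊗_V B`: the set of all G-ideals on `A ⊗ B`. -/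
def GIdT (A B : SupCat V) := {ξ : A.carrier → B.carrier → V // IsGIdeal A B ξ}

/-- The hom of the `V`-category `A ⊗_V B`. -/
def tHom (A B : SupCat V) (ξ ζ : GIdT A B) : V :=
  ⨅ a, ⨅ b, qhom (ξ.1 a b) (ζ.1 a b)

/-- The universal map `i : A ⊗ B → A ⊗_V B`: the least G-ideal above the
representable presheaf at `(a₀, b₀)`. -/
def iTensor (A B : SupCat V) (a₀ : A.carrier) (b₀ : B.carrier) :
    A.carrier → B.carrier → V :=
  qRefl A B (fun a b => A.hom a a₀ * B.hom b b₀)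

theorem le_qhom {u v w : V} : u ≤ qhom v w ↔ u * v ≤ w := by
  constructor
  · intro hu
    refine (mul_le_mul_left hu v).trans ?_
    unfold qhom
    rw [IsQuantale.sSup_mul_distrib]
    exact iSup₂_le fun _ ht => ht
  · intro hu
    exact le_sSup hu

theorem le_iInf_qhom_iff (A B : SupCat V) (φ : PSh A) (ψ : PSh B)
    (ξ : A.carrier → B.carrier → V) (u : V) :
    u ≤ (⨅ a, ⨅ b, qhom (φ.1 a * ψ.1 b) (ξ a b)) ↔
      ∀ a b, u * (φ.1 a * ψ.1 b) ≤ ξ a b := by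
  simp only [le_iInf_iff, le_qhom]

theorem IsGIdeal.le_sup_iff {A B : SupCat V} {ξ : A.carrier → B.carrier → V}
    (hξ : IsGIdeal A B ξ) (φ : PSh A) (ψ : PSh B) (u : V) :
    u ≤ ξ (A.sup φ) (B.sup ψ) ↔ ∀ a b, u * (φ.1 a * ψ.1 b) ≤ ξ a b := by
  rw [← hξ.2, le_iInf_qhom_iff]

theorem le_qRefl_iff {A B : SupCat V} {θ : A.carrier → B.carrier → V} {u : V}
    {a : A.carrier} {b : B.carrier} :
    u ≤ qRefl A B θ a b ↔
      ∀ ζ, IsGIdeal A B ζ → (∀ a' b', θ a' b' ≤ ζ a' b') → u ≤ ζ a b := by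
  simp only [qRefl, Set.mem_ofPred_eq, le_iInf_iff, and_imp]

theorem isGIdeal_qRefl (A B : SupCat V) (θ : A.carrier → B.carrier → V) :
    IsGIdeal A B (qRefl A B θ) := by
  constructor
  · intro a a' b b'
    rw [le_qRefl_iff]
    intro ζ hζ hθ
    exact (mul_le_mul_right (le_qRefl_iff.1 le_rfl ζ hζ hθ) _).trans (hζ.1 a a' b b')
  · intro φ ψ
    refine eq_of_forall_le_iff fun u => ?_
    rw [le_iInf_qhom_iff, le_qRefl_iff]
    simp only [le_qRefl_iff]
    constructor
    · intro H ζ hζ hθ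
      exact (hζ.le_sup_iff φ ψ u).2 fun a b => H a b ζ hζ hθ
    · intro H a b ζ hζ hθ
      exact (hζ.le_sup_iff φ ψ u).1 (H ζ hζ hθ) a b

theorem isGIdeal_cotensor {A B : SupCat V} {ζ : A.carrier → B.carrier → V}
    (hζ : IsGIdeal A B ζ) (v : V) : IsGIdeal A B (fun a b => qhom v (ζ a b)) := by
  constructor
  · intro a a' b b'
    rw [le_qhom, mul_assoc]
    exact (mul_le_mul_right (le_qhom.1 le_rfl) _).trans (hζ.1 a a' b b')
  · intro φ ψ
    refine eq_of_forall_le_iff fun u => ?_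
    rw [le_iInf_qhom_iff, le_qhom, hζ.le_sup_iff]
    simp only [le_qhom, mul_right_comm u _ v]

/-- The G-ideal `i(a,b)` as an element of the tensor product `A ⊗_V B`. -/
def iG (A B : SupCat V) (a : A.carrier) (b : B.carrier) : GIdT A B :=
  ⟨iTensor A B a b, isGIdeal_qRefl A B _⟩

theorem tHom_iG (A B : SupCat V) (a : A.carrier) (b : B.carrier) (ζ : GIdT A B) :
    tHom A B (iG A B a b) ζ = ζ.1 a b := by
  apply le_antisymm
  · have h1 : (1 : V) ≤ iTensor A B a b a b :=
      le_qRefl_iff.2 fun ξ _ hθ =>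
        (one_le_mul (A.refl a) (B.refl b)).trans (hθ a b)
    have h2 : tHom A B (iG A B a b) ζ * iTensor A B a b a b ≤ ζ.1 a b :=
      le_qhom.1 ((iInf_le _ a).trans (iInf_le _ b))
    exact (le_mul_of_one_le_right' h1).trans h2
  · refine le_iInf₂ fun x y => ?_
    rw [le_qhom, mul_comm, ← le_qhom]
    exact le_qRefl_iff.1 le_rfl _ (isGIdeal_cotensor ζ.2 (ζ.1 a b))
      fun x' y' => le_qhom.2 (ζ.2.1 x' a y' b)

/-- The universal `V`-functor `i : A ⊗ B → A ⊗_V B` is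
point-separating: two right-adjoint maps `A ⊗_V B → C` agreeing on all `i(a,b)`
are equal. -/
theorem stmt10 (A B C : SupCat V)
    (f f' : GIdT A B → C.carrier) (h h' : C.carrier → GIdT A B)
    (hadj : ∀ (ξ : GIdT A B) (c : C.carrier),
        C.hom (f ξ) c = tHom A B ξ (h c))
    (hadj' : ∀ (ξ : GIdT A B) (c : C.carrier),
        C.hom (f' ξ) c = tHom A B ξ (h' c))
    (hagree : ∀ (a : A.carrier) (b : B.carrier) (ξ : GIdT A B),
        ξ.1 = iTensor A B a b → f ξ = f' ξ) :
    f = f' := by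
  have hh : ∀ c, h c = h' c := by
    intro c
    refine Subtype.ext (funext fun a => funext fun b => ?_)
    rw [← tHom_iG, ← tHom_iG, ← hadj, ← hadj', hagree a b (iG A B a b) rfl]
  have key : ∀ ξ c, C.hom (f ξ) c = C.hom (f' ξ) c := by
    intro ξ c
    rw [hadj, hadj', hh]
  funext ξ
  apply C.separated
  · rw [key]
    exact C.refl _
  · rw [← key]
    exact C.refl _
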